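/- There exists a constant c > 0 such that the following holds: for every n ≥ 1, every symmetric Boolean function f : {-1,1}^n → {-1,1} with associated univariate predicate F, and every integer t with 1 ≤ t ≤ n/2 and F(t−1) ≠ F(t), one has deg_{1/3}(f) ≥ c·t. -/

import Mathlib

/-!
Averaging an approximating polynomial over the points with exactly `k` entries `-1` gives a
univariate polynomial `q`, of no larger degree, with `|q(k) - F(k)| ≤ 1/3` for `k = 0, …, n`
(`exists_univariate`). So `|q| ≤ 4/3` at these integers, while `|q(t) - q(t-1)| ≥ 4/3`. The bound
follows from a discrete form of Bernstein's inequality (`central_difference_lt`), proved by an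
interpolation formula with integer nodes in the spirit of M. Riesz; `q` is never bounded at
non-integer points, which would not be possible near the ends of `[0, n]`.

Put `Q(u) = q((u + 2t - 1)/2)`, so that `u = ±1` correspond to `t` and `t - 1`, and odd integers
`u` to integers. If `deg Q ≤ 2m`, then `Q(u) - Q(-u) = 2 u h(u²)` with `deg h < m`, and `h(1)` is
given by Lagrange interpolation at the `m` nodes `bᵢ²`, where `bᵢ = 9(2i+1)`, `i < m`. Here
`|h(bᵢ²)| ≤ (4/3)/bᵢ`, and the interpolation coefficient is at most
`∏_{j ≠ i} (2j+1)² / |(2i+1)² - (2j+1)²| ≤ 2/(2i+1)` (`nodeWeight_le`; as `m → ∞` the product tends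
to `(4/π)/(2i+1)`). Since `∑ 1/(2i+1)² ≤ 2`, this yields
`|Q(1) - Q(-1)| ≤ 2 · (4/3) · (2/9) · 2 = 32/27 < 4/3`.

The nodes stay inside `{0, …, 2t-1}` for `m = ⌊(t+4)/9⌋`, so the degree exceeds `2m`, and in
particular it is at least `t/9`.
-/


/-- The `ε`-approximate degree of a function on the Boolean cube `{-1,1}^n`. -/
noncomputable def approxDeg {n : ℕ} (f : (Fin n → ℝ) → ℝ) (ε : ℝ) : ℕ :=
  sInf {d : ℕ | ∃ p : MvPolynomial (Fin n) ℝ, p.totalDegree ≤ d ∧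
    ∀ x : Fin n → ℝ, (∀ i, x i = 1 ∨ x i = -1) → |MvPolynomial.eval x p - f x| ≤ ε}

open Finset

/-! ### Interpolation weights at the squares of odd numbers -/

theorem prod_gaps (i n : ℕ) (hn : n ≤ i) :
    (∏ j ∈ range n, ((i - j) * (i + 1 + j))) * (i - n).factorial = (i + n).factorial := by
  induction n with
  | zero => simp
  | succ n ih =>
    have h := ih (by omega)
    obtain ⟨r, rfl⟩ : ∃ r, i = n + 1 + r := ⟨i - (n + 1), by omega⟩
    rw [prod_range_succ]
    have e1 : n + 1 + r - n = r + 1 := by omega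
    have e2 : n + 1 + r - (n + 1) = r := by omega
    rw [e1, Nat.factorial_succ] at h
    rw [e1, e2, ← Nat.add_assoc, Nat.factorial_succ, ← h]
    ring

/-- The product `∏_{j ≠ i, j < m} (2j+1)² / |(2i+1)² - (2j+1)²|`: the absolute value at `0` of the
`i`-th Lagrange basis polynomial for the nodes `1², 3², …, (2m-1)²`. -/
noncomputable def nodeWeight (i m : ℕ) : ℝ :=
  ∏ j ∈ (range m).erase i, (2 * (j : ℝ) + 1) ^ 2 / |(2 * (i : ℝ) + 1) ^ 2 - (2 * (j : ℝ) + 1) ^ 2|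

/-- Closed form of `nodeWeight i m` for `m = i + 1 + k`, written without division or truncated
subtraction. -/
theorem nodeWeight_closed (i k : ℕ) :
    nodeWeight i (i + 1 + k) *
      ((2 * i + 1) * 4 ^ (i + k) * k.factorial * (2 * i + 1 + k).factorial) =
    ∏ j ∈ range (i + 1 + k), (2 * (j : ℝ) + 1) ^ 2 := by
  induction k with
  | zero =>
    have he : (range (i + 1)).erase i = range i := by
      ext j; simp; omega
    have hg : (∏ j ∈ range i, |(2 * (i : ℝ) + 1) ^ 2 - (2 * (j : ℝ) + 1) ^ 2| : ℝ) =
        4 ^ i * ((2 * i).factorial : ℝ) := by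
      have h := prod_gaps i i le_rfl
      rw [Nat.sub_self, Nat.factorial_zero, mul_one, ← two_mul] at h
      rw [← h]
      push_cast
      rw [← card_range i, ← prod_const, card_range, ← prod_mul_distrib]
      refine prod_congr rfl fun j hj => ?_
      have hj := mem_range.1 hj
      rw [Nat.cast_sub hj.le]
      have hj' : (j : ℝ) < i := by exact_mod_cast hj
      rw [abs_of_pos (by nlinarith [(Nat.cast_nonneg j : (0 : ℝ) ≤ j)])]
      ring
    simp only [add_zero, nodeWeight, he, prod_div_distrib, hg]
    rw [prod_range_succ, Nat.factorial_succ]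
    have := Nat.factorial_ne_zero (2 * i)
    push_cast
    field_simp
    simp
  | succ k ih =>
    have he : (range (i + 1 + (k + 1))).erase i =
        insert (i + 1 + k) ((range (i + 1 + k)).erase i) := by
      ext j; simp; omega
    have hw : nodeWeight i (i + 1 + (k + 1)) =
        (2 * ((i + 1 + k : ℕ) : ℝ) + 1) ^ 2 / (4 * ((k : ℝ) + 1) * (2 * i + 2 + k)) *
          nodeWeight i (i + 1 + k) := by
      rw [nodeWeight, he, prod_insert (by simp), nodeWeight]
      congr 2
      push_cast
      rw [abs_of_neg (by nlinarith [(Nat.cast_nonneg i : (0 : ℝ) ≤ i),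
        (Nat.cast_nonneg k : (0 : ℝ) ≤ k)])]
      ring
    rw [← Nat.add_assoc (i + 1) k 1, prod_range_succ, ← ih, Nat.add_assoc (i + 1) k 1, hw]
    have e : 2 * i + 1 + (k + 1) = (2 * i + 1 + k) + 1 := by ring
    rw [e, Nat.factorial_succ, Nat.factorial_succ, ← Nat.add_assoc, pow_succ]
    push_cast
    field_simp
    ring

theorem factorial_spread (i k : ℕ) :
    (i + k).factorial * (i + k + 1).factorial ≤ k.factorial * (2 * i + 1 + k).factorial := by
  induction i generalizing k with
  | zero => simp [add_comm]
  | succ i ih =>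
    have h := ih (k + 1)
    have e1 : i + 1 + k = i + (k + 1) := by ring
    have e2 : 2 * (i + 1) + 1 + k = (2 * i + 1 + (k + 1)) + 1 := by ring
    rw [e1, e2]
    refine h.trans ?_
    rw [Nat.factorial_succ k, Nat.factorial_succ (2 * i + 1 + (k + 1))]
    have : k + 1 ≤ 2 * i + 1 + (k + 1) + 1 := by omega
    calc _ = (k + 1) * (k.factorial * (2 * i + 1 + (k + 1)).factorial) := by ring
      _ ≤ (2 * i + 1 + (k + 1) + 1) * (k.factorial * (2 * i + 1 + (k + 1)).factorial) := by gcongr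
      _ = _ := by ring

/-- The slightly weaker bound `∏ (2j+1)² ≤ 2 · 4 ^ m * m! * (m + 1)!` is what is used; the factor
`(2m+1)/(m+1)` in place of `2` is needed for the induction, because `(2m+3)² > 4(m+1)(m+2)`. -/
theorem prod_odd_sq_le (m : ℕ) :
    (∏ j ∈ range (m + 1), (2 * (j : ℝ) + 1) ^ 2 : ℝ) * ((m : ℝ) + 1) ≤
      (2 * (m : ℝ) + 1) * (4 ^ m * (m.factorial : ℝ) * ((m + 1).factorial : ℝ)) := by
  induction m with
  | zero => simp
  | succ m ih =>
    rw [prod_range_succ _ (m + 1), Nat.factorial_succ (m + 1)]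
    rw [Nat.factorial_succ m] at *
    set P := ∏ j ∈ range (m + 1), (2 * (j : ℝ) + 1) ^ 2
    push_cast at *
    set A : ℝ := 4 ^ m * m.factorial * m.factorial with hA
    have hA0 : 0 ≤ A := by positivity
    have hm : (0 : ℝ) ≤ m := Nat.cast_nonneg m
    have ih' : P ≤ (2 * m + 1) * A := by
      have : P * (m + 1) ≤ ((2 * m + 1) * A) * (m + 1) := by rw [hA]; linarith
      exact le_of_mul_le_mul_right this (by positivity)
    calc P * (2 * ((m : ℝ) + 1) + 1) ^ 2 * (m + 1 + 1)
        ≤ ((2 * m + 1) * A) * (2 * ((m : ℝ) + 1) + 1) ^ 2 * (m + 1 + 1) := by gcongr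
      _ = ((2 * m + 1) * (2 * m + 3)) * ((2 * m + 3) * (m + 2) * A) := by ring
      _ ≤ (4 * (m + 1) ^ 2) * ((2 * m + 3) * (m + 2) * A) := by
          refine mul_le_mul_of_nonneg_right (by nlinarith) (by positivity)
      _ = _ := by rw [hA]; ring

theorem nodeWeight_nonneg (i m : ℕ) : 0 ≤ nodeWeight i m :=
  prod_nonneg fun _ _ => by positivity

theorem nodeWeight_le {i m : ℕ} (him : i < m) : nodeWeight i m * (2 * i + 1) ≤ 2 := by
  obtain ⟨k, rfl⟩ : ∃ k, m = i + 1 + k := ⟨m - (i + 1), by omega⟩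
  have h1 := nodeWeight_closed i k
  have h2 := prod_odd_sq_le (i + k)
  have h3 : ((i + k).factorial * (i + k + 1).factorial : ℝ) ≤
      k.factorial * (2 * i + 1 + k).factorial := by exact_mod_cast factorial_spread i k
  have e : i + 1 + k = i + k + 1 := by ring
  rw [e] at h1 ⊢
  rw [← h1] at h2
  set B : ℝ := 4 ^ (i + k) * (k.factorial * (2 * i + 1 + k).factorial) with hB
  have hB0 : 0 < B := by positivity
  have h4 : (4 : ℝ) ^ (i + k) * (i + k).factorial * (i + k + 1).factorial ≤ B := by
    rw [hB, mul_assoc]; gcongr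
  have h5 : (nodeWeight i (i + k + 1) * (2 * i + 1)) * (((i + k : ℕ) : ℝ) + 1) * B ≤
      2 * (((i + k : ℕ) : ℝ) + 1) * B := by
    calc _ = _ := by rw [hB]; ring
      _ ≤ _ := h2
      _ ≤ (2 * ((i + k : ℕ) : ℝ) + 1) * B := by gcongr
      _ ≤ _ := by gcongr; linarith
  have h6 := le_of_mul_le_mul_right h5 hB0
  exact le_of_mul_le_mul_right h6 (by positivity)

/-- The subtracted term makes the induction telescope. -/
theorem sum_inv_odd_sq_le (m : ℕ) :
    (∑ i ∈ range m, 1 / (2 * (i : ℝ) + 1) ^ 2 : ℝ) ≤ 2 - 2 / (2 * (m : ℝ) + 1) := by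
  induction m with
  | zero => simp
  | succ m ih =>
    rw [sum_range_succ]
    have h : 1 / (2 * (m : ℝ) + 1) ^ 2 ≤ 2 / (2 * m + 1) - 2 / (2 * ((m + 1 : ℕ) : ℝ) + 1) := by
      have e : 2 / (2 * (m : ℝ) + 1) - 2 / (2 * ((m + 1 : ℕ) : ℝ) + 1) =
          4 / ((2 * m + 1) * (2 * m + 3)) := by
        push_cast
        have : 2 * ((m : ℝ) + 1) + 1 = 2 * m + 3 := by ring
        rw [this]
        field_simp
        ring
      rw [e, div_le_div_iff₀ (by positivity) (by positivity)]
      nlinarith [(Nat.cast_nonneg m : (0 : ℝ) ≤ m)]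
    linarith


/-! ### A discrete Bernstein inequality -/

open Polynomial in
/-- The odd part of a polynomial `Q` of degree at most `2m` is `u * h(u²)` with `deg h < m`. -/
theorem odd_part_eval (Q : ℝ[X]) (m : ℕ) (hQ : Q.natDegree ≤ 2 * m) :
    ∃ h : ℝ[X], h.degree < m ∧ ∀ u : ℝ, Q.eval u - Q.eval (-u) = 2 * u * h.eval (u ^ 2) := by
  refine ⟨∑ j ∈ range m, C (Q.coeff (2 * j + 1)) * X ^ j, ?_, fun u => ?_⟩
  · refine (degree_sum_le _ _).trans_lt ?_
    refine (Finset.sup_lt_iff (WithBot.bot_lt_coe m)).2 ?_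
    intro j hj
    refine (degree_C_mul_X_pow_le _ _).trans_lt ?_
    exact WithBot.coe_lt_coe.2 (mem_range.1 hj)
  · rw [eval_eq_sum_range' (Nat.lt_succ_of_le hQ), eval_eq_sum_range' (Nat.lt_succ_of_le hQ)]
    clear hQ
    rw [eval_finsetSum]
    simp only [eval_mul, eval_C, eval_pow, eval_X]
    induction m with
    | zero => simp
    | succ m ih =>
      rw [sum_range_succ (fun x => Q.coeff (2 * x + 1) * (u ^ 2) ^ x) m, mul_add (2 * u), ← ih]
      rw [show (2 * (m + 1)).succ = 2 * m + 1 + 1 + 1 by omega]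
      simp only [sum_range_succ, Nat.succ_eq_add_one]
      have e1 : (-u) ^ (2 * m + 1) = - u ^ (2 * m + 1) := Odd.neg_pow ⟨m, rfl⟩ u
      have e2 : (-u) ^ (2 * m + 1 + 1) = u ^ (2 * m + 1 + 1) := Even.neg_pow ⟨m + 1, by ring⟩ u
      rw [e1, e2]
      ring

open Polynomial in
/-- A polynomial of degree at most `2m` that is bounded by `4/3` at the `2m` points `±9(2i+1)`,
`i < m`, varies by less than `4/3` between `-1` and `1`. The spacing factor `9` is the least odd
integer for which this argument gives a strict inequality. -/
theorem central_difference_lt (Q : ℝ[X]) (m : ℕ) (hQ : Q.natDegree ≤ 2 * m)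
    (hb : ∀ i < m, |Q.eval (9 * (2 * (i : ℝ) + 1))| ≤ 4 / 3 ∧
      |Q.eval (-(9 * (2 * (i : ℝ) + 1)))| ≤ 4 / 3) :
    |Q.eval 1 - Q.eval (-1)| < 4 / 3 := by
  obtain ⟨h, hdeg, hodd⟩ := odd_part_eval Q m hQ
  set v : ℕ → ℝ := fun i => (9 * (2 * (i : ℝ) + 1)) ^ 2 with hv
  have hinj : Set.InjOn v (range m) := by
    intro i _ j _ hij
    have h1 : 9 * (2 * (i : ℝ) + 1) = 9 * (2 * (j : ℝ) + 1) :=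
      (pow_left_inj₀ (by positivity) (by positivity) two_ne_zero).1 hij
    have : (i : ℝ) = j := by linarith
    exact_mod_cast this
  have hint := congrArg (Polynomial.eval 1)
    (Lagrange.eq_interpolate (f := h) hinj (by simpa using hdeg))
  have hbasis : ∀ i ∈ range m, |(Lagrange.basis (range m) v i).eval 1| ≤ nodeWeight i m := by
    intro i hi
    rw [Lagrange.basis, eval_prod, abs_prod, nodeWeight]
    refine prod_le_prod (fun _ _ => abs_nonneg _) fun j hj => ?_
    have hji := (mem_erase.1 hj).1
    have hne : v i ≠ v j := fun e =>
      hji (hinj (mem_coe.2 (mem_erase.1 hj).2) (mem_coe.2 hi) e.symm)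
    simp only [Lagrange.basisDivisor, eval_mul, eval_C, eval_sub, eval_X, abs_mul, abs_inv]
    have e1 : v i - v j = 81 * ((2 * (i : ℝ) + 1) ^ 2 - (2 * (j : ℝ) + 1) ^ 2) := by
      simp only [hv]; ring
    have hpos : 0 < |(2 * (i : ℝ) + 1) ^ 2 - (2 * (j : ℝ) + 1) ^ 2| := by
      rw [abs_pos]
      intro e
      rw [e, mul_zero] at e1
      exact hne (sub_eq_zero.1 e1)
    have e2 : |1 - v j| ≤ 81 * (2 * (j : ℝ) + 1) ^ 2 := by
      have hj0 : (0 : ℝ) ≤ j := Nat.cast_nonneg j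
      rw [abs_le]; simp only [hv]; constructor <;> nlinarith
    rw [e1, abs_mul, inv_mul_eq_div, div_le_div_iff₀ (by positivity) hpos]
    calc _ ≤ 81 * (2 * (j : ℝ) + 1) ^ 2 * |(2 * (i : ℝ) + 1) ^ 2 - (2 * (j : ℝ) + 1) ^ 2| := by
          gcongr
      _ = _ := by rw [abs_of_pos (show (0 : ℝ) < 81 by norm_num)]; ring
  have hval : ∀ i ∈ range m, |h.eval (v i)| * (2 * (i : ℝ) + 1) ≤ 4 / 27 := by
    intro i hi
    have h0 := hodd (9 * (2 * (i : ℝ) + 1))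
    have hb' := hb i (mem_range.1 hi)
    have h1 : |2 * (9 * (2 * (i : ℝ) + 1)) * h.eval (v i)| ≤ 8 / 3 := by
      rw [← h0]
      refine (abs_sub _ _).trans ?_
      linarith [hb'.1, hb'.2]
    rw [abs_mul, abs_of_pos (by positivity)] at h1
    linarith
  have hterm : ∀ i ∈ range m, |h.eval (v i) * (Lagrange.basis (range m) v i).eval 1| ≤
      8 / 27 * (1 / (2 * (i : ℝ) + 1) ^ 2) := by
    intro i hi
    rw [abs_mul, mul_one_div, le_div_iff₀ (by positivity)]
    calc _ ≤ |h.eval (v i)| * nodeWeight i m * (2 * (i : ℝ) + 1) ^ 2 := by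
          gcongr; exact hbasis i hi
      _ = (|h.eval (v i)| * (2 * (i : ℝ) + 1)) * (nodeWeight i m * (2 * (i : ℝ) + 1)) := by ring
      _ ≤ 4 / 27 * 2 := mul_le_mul (hval i hi) (nodeWeight_le (mem_range.1 hi))
          (mul_nonneg (nodeWeight_nonneg _ _) (by positivity)) (by norm_num)
      _ = _ := by norm_num
  have h1 : |h.eval 1| ≤ 16 / 27 := by
    rw [hint, Lagrange.interpolate_apply, eval_finsetSum]
    simp only [eval_mul, eval_C]
    refine (abs_sum_le_sum_abs _ _).trans ((sum_le_sum hterm).trans ?_)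
    rw [← mul_sum]
    have := sum_inv_odd_sq_le m
    have : (0 : ℝ) ≤ 2 / (2 * (m : ℝ) + 1) := by positivity
    linarith
  have h2 := hodd 1
  rw [one_pow] at h2
  rw [h2, abs_mul]
  norm_num
  linarith

/-! ### Symmetrization -/

/-- The point of the cube whose set of `-1` entries is `T`. -/
def cubePoint {n : ℕ} (T : Finset (Fin n)) : Fin n → ℝ := fun i => if i ∈ T then -1 else 1

theorem cubePoint_mem {n : ℕ} (T : Finset (Fin n)) (i : Fin n) :
    cubePoint T i = 1 ∨ cubePoint T i = -1 := by
  unfold cubePoint; split_ifs <;> simp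

theorem filter_cubePoint {n : ℕ} (T : Finset (Fin n)) :
    univ.filter (fun i => cubePoint T i = -1) = T := by
  ext i
  rw [mem_filter]
  simp only [cubePoint, mem_univ, true_and]
  split_ifs with h
  · simp [h]
  · simp only [h, iff_false]; norm_num

open Polynomial in
/-- The average of `g` over the `k`-element subsets of `Fin n` is, for `0 ≤ k ≤ n`, the value at `k`
of one polynomial of degree at most `d`. Sets `T` stand for the points `cubePoint T`. -/
def HasSymm (n d : ℕ) (g : Finset (Fin n) → ℝ) : Prop :=
  ∃ q : ℝ[X], q.natDegree ≤ d ∧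
    ∀ k ≤ n, ∑ T ∈ powersetCard k univ, g T = (n.choose k : ℝ) * q.eval (k : ℝ)

theorem HasSymm.sum {n d : ℕ} {ι : Type*} (s : Finset ι) (c : ι → ℝ)
    (g : ι → Finset (Fin n) → ℝ) (h : ∀ a ∈ s, HasSymm n d (g a)) :
    HasSymm n d (fun T => ∑ a ∈ s, c a * g a T) := by
  choose! q hq using h
  refine ⟨∑ a ∈ s, Polynomial.C (c a) * q a, ?_, fun k hk => ?_⟩
  · exact Polynomial.natDegree_sum_le_of_forall_le _ _ fun a ha =>
      (Polynomial.natDegree_C_mul_le _ _).trans (hq a ha).1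
  · rw [sum_comm, Polynomial.eval_finsetSum, mul_sum]
    refine sum_congr rfl fun a ha => ?_
    rw [← mul_sum, (hq a ha).2 k hk, Polynomial.eval_mul, Polynomial.eval_C]
    ring

/-- A `k`-element set contains `U` with probability `choose k #U / choose n #U`, which is a polynomial
of degree `#U` in `k`. -/
theorem hasSymm_subset {n d : ℕ} (U : Finset (Fin n)) (hU : #U ≤ d) :
    HasSymm n d (fun T => if U ⊆ T then 1 else 0) := by
  have hUn : #U ≤ n := by simpa using card_le_univ U
  refine ⟨Polynomial.C (((n.choose #U : ℝ) * (#U).factorial)⁻¹) * descPochhammer ℝ #U, ?_,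
    fun k hk => ?_⟩
  · refine (Polynomial.natDegree_C_mul_le _ _).trans ?_
    rwa [descPochhammer_natDegree]
  · rw [Polynomial.eval_mul, Polynomial.eval_C, descPochhammer_eval_eq_descFactorial,
      Nat.descFactorial_eq_factorial_mul_choose, sum_boole]
    have hc : (n.choose #U : ℝ) ≠ 0 := by exact_mod_cast (Nat.choose_pos hUn).ne'
    have hf : ((#U).factorial : ℝ) ≠ 0 := by exact_mod_cast Nat.factorial_ne_zero _
    rcases le_or_gt #U k with h | h
    · rw [card_filter_powersetCard_subset U univ k (subset_univ U) h, card_univ, Fintype.card_fin]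
      have := Nat.choose_mul (n := n) h
      have : (n.choose k : ℝ) * k.choose #U = n.choose #U * (n - #U).choose (k - #U) := by
        exact_mod_cast this
      push_cast
      field_simp
      linarith
    · rw [Nat.choose_eq_zero_of_lt h, filter_false_of_mem]
      · simp
      · intro T hT hUT
        have := card_le_card hUT
        rw [(mem_powersetCard.1 hT).2] at this
        omega

/-- On the cube a monomial is the product of the variables with odd exponent; substituting
`xᵢ = 1 - 2·[i ∈ T]` expands it into indicators of `U ⊆ T` with `#U` at most the degree. -/
theorem hasSymm_monomial {n d : ℕ} (α : Fin n →₀ ℕ) (hα : (α.sum fun _ e => e) ≤ d) :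
    HasSymm n d (fun T => ∏ i, cubePoint T i ^ α i) := by
  set S : Finset (Fin n) := univ.filter (fun i => Odd (α i)) with hS
  have hcard : #S ≤ d := by
    refine le_trans ?_ hα
    rw [Finsupp.sum_fintype _ _ (by simp), hS, card_filter]
    refine sum_le_sum fun i _ => ?_
    split_ifs with h
    · exact h.pos
    · exact Nat.zero_le _
  have hexp : (fun T : Finset (Fin n) => ∏ i, cubePoint T i ^ α i) =
      fun T => ∑ U ∈ S.powerset, (-2 : ℝ) ^ #U * (if U ⊆ T then 1 else 0) := by
    funext T
    have h1 : ∏ i, cubePoint T i ^ α i = ∏ i ∈ S, (1 + (if i ∈ T then (-2 : ℝ) else 0)) := by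
      rw [hS, prod_filter]
      refine prod_congr rfl fun i _ => ?_
      unfold cubePoint
      by_cases ho : Odd (α i)
      · by_cases hi : i ∈ T
        · simp [ho, hi, ho.neg_one_pow]; norm_num
        · simp [ho, hi]
      · by_cases hi : i ∈ T
        · simp [ho, hi, (Nat.not_odd_iff_even.1 ho).neg_one_pow]
        · simp [ho, hi]
    rw [h1, prod_one_add]
    refine sum_congr rfl fun U _ => ?_
    rw [prod_ite_zero]
    by_cases hUT : U ⊆ T
    · rw [if_pos hUT, if_pos (fun i hi => hUT hi)]; simp
    · rw [if_neg hUT, if_neg (fun h => hUT (fun i hi => h i hi))]; simp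
  rw [hexp]
  exact HasSymm.sum _ _ (fun U T => if U ⊆ T then 1 else 0) fun U hU =>
    hasSymm_subset U ((card_le_card (mem_powerset.1 hU)).trans hcard)

/-- Symmetrization (Minsky–Papert) does not increase the degree. -/
theorem hasSymm_eval {n : ℕ} (p : MvPolynomial (Fin n) ℝ) :
    HasSymm n p.totalDegree (fun T => MvPolynomial.eval (cubePoint T) p) := by
  have : (fun T => MvPolynomial.eval (cubePoint T) p) =
      fun T => ∑ α ∈ p.support, p.coeff α * ∏ i, cubePoint T i ^ α i := by
    funext T
    rw [MvPolynomial.eval_eq']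
  rw [this]
  exact HasSymm.sum p.support (fun α => p.coeff α) (fun α T => ∏ i, cubePoint T i ^ α i)
    fun α hα => hasSymm_monomial α (MvPolynomial.le_totalDegree hα)

/-- Symmetric functions on the cube are represented exactly by polynomials, so the set whose
infimum defines `approxDeg` is nonempty and `approxDeg` is not the junk value `sInf ∅ = 0`. -/
theorem exists_exact_rep {n : ℕ} (F : ℕ → ℝ) :
    ∃ p : MvPolynomial (Fin n) ℝ, ∀ x : Fin n → ℝ, (∀ i, x i = 1 ∨ x i = -1) →
      MvPolynomial.eval x p = F (univ.filter (fun i => x i = -1)).card := by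
  refine ⟨Polynomial.aeval (∑ i : Fin n, MvPolynomial.C (1 / 2 : ℝ) * (1 - MvPolynomial.X i))
    (Lagrange.interpolate (range (n + 1)) (fun k : ℕ => (k : ℝ)) F), fun x hx => ?_⟩
  have hw : MvPolynomial.eval x
      (∑ i : Fin n, MvPolynomial.C (1 / 2 : ℝ) * (1 - MvPolynomial.X i)) =
      ((univ.filter (fun i => x i = -1)).card : ℝ) := by
    rw [map_sum, card_filter, Nat.cast_sum]
    refine sum_congr rfl fun i _ => ?_
    rcases hx i with h | h <;> simp [h] <;> norm_num
  rw [Polynomial.aeval_def, Polynomial.hom_eval₂, hw]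
  have hc : (MvPolynomial.eval x).comp (algebraMap ℝ (MvPolynomial (Fin n) ℝ)) = RingHom.id ℝ := by
    ext; simp
  rw [hc, Polynomial.eval₂_id]
  refine Lagrange.eval_interpolate_at_node F (v := fun k : ℕ => (k : ℝ))
    (Nat.cast_injective.injOn) ?_
  rw [mem_range, Nat.lt_succ_iff]
  simpa using card_le_univ (univ.filter (fun i => x i = -1))

/-- An optimal approximant of `f`, symmetrized. -/
theorem exists_univariate {n : ℕ} (f : (Fin n → ℝ) → ℝ) (F : ℕ → ℝ)
    (hF : ∀ x : Fin n → ℝ, (∀ i, x i = 1 ∨ x i = -1) →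
      f x = F (univ.filter (fun i => x i = -1)).card) :
    ∃ q : Polynomial ℝ, q.natDegree ≤ approxDeg f (1 / 3) ∧
      ∀ k : ℕ, k ≤ n → |q.eval (k : ℝ) - F k| ≤ 1 / 3 := by
  have hne : {d : ℕ | ∃ p : MvPolynomial (Fin n) ℝ, p.totalDegree ≤ d ∧
      ∀ x : Fin n → ℝ, (∀ i, x i = 1 ∨ x i = -1) →
        |MvPolynomial.eval x p - f x| ≤ 1 / 3}.Nonempty := by
    obtain ⟨p, hp⟩ := exists_exact_rep (n := n) F
    refine ⟨p.totalDegree, p, le_rfl, fun x hx => ?_⟩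
    rw [hp x hx, hF x hx, sub_self, abs_zero]
    norm_num
  obtain ⟨p, hpd, hp⟩ := Nat.sInf_mem hne
  obtain ⟨q, hqd, hq⟩ := hasSymm_eval p
  refine ⟨q, hqd.trans hpd, fun k hk => ?_⟩
  have hc : (0 : ℝ) < n.choose k := by exact_mod_cast Nat.choose_pos hk
  have hcard : #(powersetCard k (univ : Finset (Fin n))) = n.choose k := by simp
  have h1 : (n.choose k : ℝ) * (q.eval (k : ℝ) - F k) =
      ∑ T ∈ powersetCard k (univ : Finset (Fin n)), (MvPolynomial.eval (cubePoint T) p - F k) := by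
    rw [sum_sub_distrib, hq k hk, sum_const, hcard, nsmul_eq_mul]
    ring
  have h2 : |(n.choose k : ℝ) * (q.eval (k : ℝ) - F k)| ≤ n.choose k * (1 / 3) := by
    rw [h1]
    refine (abs_sum_le_sum_abs _ _).trans ?_
    rw [← hcard, ← nsmul_eq_mul]
    refine sum_le_card_nsmul _ _ _ fun T hT => ?_
    have h3 := hp (cubePoint T) (cubePoint_mem T)
    rwa [hF _ (cubePoint_mem T), filter_cubePoint, (mem_powersetCard.1 hT).2] at h3
  rw [abs_mul, abs_of_pos hc] at h2
  exact le_of_mul_le_mul_left h2 hc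

/-! ### The lower bound -/

theorem stmt5 :
    ∃ c : ℝ, c > 0 ∧
      ∀ (n : ℕ), 1 ≤ n →
      ∀ (f : (Fin n → ℝ) → ℝ) (F : ℕ → ℝ),
        (∀ x : Fin n → ℝ, (∀ i, x i = 1 ∨ x i = -1) → f x = 1 ∨ f x = -1) →
        (∀ x : Fin n → ℝ, (∀ i, x i = 1 ∨ x i = -1) →
          f x = F (Finset.univ.filter (fun i => x i = -1)).card) →
        ∀ t : ℕ, 1 ≤ t → 2 * t ≤ n → F (t - 1) ≠ F t →
          (approxDeg f (1/3) : ℝ) ≥ c * t := by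
  refine ⟨1 / 9, by norm_num, fun n _ f F hf hF t ht htn hne => ?_⟩
  obtain ⟨q, hqd, hq⟩ := exists_univariate f F hF
  have hFval : ∀ k ≤ n, F k = 1 ∨ F k = -1 := by
    intro k hk
    obtain ⟨T, -, hT⟩ := exists_subset_card_eq (s := (univ : Finset (Fin n))) (n := k) (by simpa)
    have h := hf _ (cubePoint_mem T)
    rwa [hF _ (cubePoint_mem T), filter_cubePoint, hT] at h
  have hqb : ∀ k : ℕ, k ≤ n → |q.eval (k : ℝ)| ≤ 4 / 3 := by
    intro k hk
    have h := abs_le.1 (hq k hk)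
    rw [abs_le]
    rcases hFval k hk with e | e <;> rw [e] at h <;> constructor <;> linarith
  by_contra! hlt
  have hD : 9 * approxDeg f (1 / 3) < t := by
    have : 9 * (approxDeg f (1 / 3) : ℝ) < t := by linarith
    exact_mod_cast this
  set m := (t + 4) / 9 with hm
  -- `u ↦ (u + 2t - 1) / 2` sends `1` to `t` and `-1` to `t - 1`, and odd integers to integers.
  set Q : Polynomial ℝ := q.comp (Polynomial.C (1 / 2) * Polynomial.X +
    Polynomial.C ((2 * (t : ℝ) - 1) / 2)) with hQ
  have hQe : ∀ u : ℝ, Q.eval u = q.eval ((u + 2 * t - 1) / 2) := by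
    intro u
    rw [hQ, Polynomial.eval_comp]
    simp only [Polynomial.eval_add, Polynomial.eval_mul, Polynomial.eval_C, Polynomial.eval_X]
    congr 1
    ring
  have hQd : Q.natDegree ≤ 2 * m := by
    have h1 : Q.natDegree ≤ q.natDegree * 1 :=
      Polynomial.natDegree_comp_le.trans (Nat.mul_le_mul_left _ Polynomial.natDegree_linear_le)
    omega
  have hsmall := central_difference_lt Q m hQd fun i hi => by
    constructor
    · have h := hqb (t + 9 * i + 4) (by omega)
      rw [hQe]
      convert h using 3
      push_cast
      ring
    · have h := hqb (t - (9 * i + 5)) (by omega)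
      rw [Nat.cast_sub (by omega)] at h
      rw [hQe]
      convert h using 3
      push_cast
      ring
  rw [hQe, hQe] at hsmall
  have e1 : (1 + 2 * (t : ℝ) - 1) / 2 = (t : ℝ) := by ring
  have e2 : (-1 + 2 * (t : ℝ) - 1) / 2 = ((t - 1 : ℕ) : ℝ) := by
    rw [Nat.cast_sub ht]; push_cast; ring
  rw [e1, e2] at hsmall
  have a1 := abs_le.1 (hq t (by omega))
  have a2 := abs_le.1 (hq (t - 1) (by omega))
  have a3 := abs_lt.1 hsmall
  rcases hFval t (by omega) with b1 | b1 <;> rcases hFval (t - 1) (by omega) with b2 | b2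
  · exact hne (b2.trans b1.symm)
  · rw [b1] at a1; rw [b2] at a2; linarith
  · rw [b1] at a1; rw [b2] at a2; linarith
  · exact hne (b2.trans b1.symm)
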